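/- In 𝔽₂[t₁,…,t₈], the product ∏_{1≤j<k≤8} (1 + t_j + t_k) is congruent to (1 + e₄ + e₆ + e₇)⁴ modulo the ideal generated by e₁, e₂, e₃, e₅. -/

import Mathlib

/-!
Both sides are symmetric, so by the Nullstellensatz for symmetric polynomials
(`mem_span_esymm_of_forall_aeval_eq_zero`) it is enough to compare their values at points `s` of an
algebraically closed field at which `e₁, e₂, e₃, e₅` vanish. There `f(x) = ∏ⱼ (x + sⱼ)` has, besides
its constant term, only the terms `x ^ 8`, `x ^ 4`, `x ^ 2`, `x`, so in characteristic two
`f(sᵢ + 1) = f(sᵢ) + c = c` with `c = 1 + e₄ + e₆ + e₇`. The square of `∏_{j < k} (1 + sⱼ + sₖ)` is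
`∏ᵢ ∏ⱼ (1 + sᵢ + sⱼ) = ∏ᵢ f(sᵢ + 1) = c ^ 8`, and square roots are unique in characteristic two.
The same argument works for `2 ^ (m + 1)` variables.
-/

open MvPolynomial Finset

/-- The `i`-th elementary symmetric polynomial in `𝔽₂[t₁,…,t₈]`. -/
noncomputable def e (i : ℕ) : MvPolynomial (Fin 8) (ZMod 2) :=
  esymm (Fin 8) (ZMod 2) i

section Vieta

variable {σ : Type*} [Fintype σ]

theorem exists_map_univ_eq {α : Type*} {u : Multiset α} (hu : u.card = Fintype.card σ) :
    ∃ s : σ → α, univ.val.map s = u := by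
  classical
  let ε : σ ≃ u := Fintype.equivOfCardEq (by rw [Multiset.card_coe, hu])
  refine ⟨fun i ↦ (ε i).1, ?_⟩
  rw [← Function.comp_def (fun x : u ↦ x.1) ε, ← Multiset.map_map, Multiset.map_univ_val_equiv,
    Multiset.map_univ_coe]

theorem exists_eq_prod_X_add_C {A : Type*} [CommRing A] [IsDomain A] {f : Polynomial A}
    (hf : f.Monic) (hsplits : f.Splits) (hdeg : f.natDegree = Fintype.card σ) :
    ∃ s : σ → A, f = ∏ i, (Polynomial.X + Polynomial.C (s i)) := by
  obtain ⟨s, hs⟩ := exists_map_univ_eq (hsplits.natDegree_eq_card_roots.symm.trans hdeg)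
  refine ⟨fun i ↦ -s i, ?_⟩
  rw [hsplits.eq_prod_roots_of_monic hf, ← hs, Multiset.map_map]
  simp only [Function.comp_def, map_neg, sub_eq_add_neg, Finset.prod]

theorem exists_aeval_esymm_eq (R : Type*) {K : Type*} [CommSemiring R] [Field K] [IsAlgClosed K]
    [Algebra R K] (c : Fin (Fintype.card σ) → K) :
    ∃ s : σ → K, ∀ i : Fin (Fintype.card σ), aeval s (esymm σ R (i + 1)) = c i := by
  classical
  let n := Fintype.card σ
  let q : Polynomial K := Polynomial.ofFn n (c ∘ Fin.rev)
  have hq : q.degree < n := Polynomial.ofFn_degree_lt _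
  have hdeg : (Polynomial.X ^ n + q).natDegree = n :=
    Polynomial.natDegree_eq_of_degree_eq_some <| by
      rw [Polynomial.degree_add_eq_left_of_degree_lt] <;> simp [hq]
  obtain ⟨s, hs⟩ :=
    exists_eq_prod_X_add_C (Polynomial.monic_X_pow_add hq) (IsAlgClosed.splits _) hdeg
  refine ⟨s, fun i ↦ ?_⟩
  have hcoeff : (Polynomial.X ^ n + q).coeff i.rev = c i := by
    rw [Polynomial.coeff_add, Polynomial.coeff_X_pow, if_neg i.rev.isLt.ne, zero_add,
      Polynomial.ofFn_coeff_eq_val_of_lt _ i.rev.isLt, Function.comp_apply, Fin.rev_rev]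
  have hindex : (i + 1 : ℕ) = (univ : Finset σ).val.card - i.rev := by
    simp only [card_val, card_univ, Fin.val_rev]
    omega
  rw [← hcoeff, hs, Finset.prod, Multiset.prod_X_add_C_coeff' _ _ i.rev.isLt.le,
    aeval_esymm_eq_multiset_esymm, hindex]

theorem esymm_eq_zero_of_card_lt {R : Type*} [CommSemiring R] {i : ℕ} (hi : Fintype.card σ < i) :
    esymm σ R i = 0 := by
  rw [esymm, powersetCard_eq_empty.mpr hi, sum_empty]

theorem prod_add_eq_sum_aeval_esymm (R : Type*) {A : Type*} [CommSemiring R] [CommSemiring A]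
    [Algebra R A] (s : σ → A) (x : A) :
    ∏ j, (x + s j) = ∑ i ∈ range (Fintype.card σ + 1),
      aeval s (esymm σ R i) * x ^ (Fintype.card σ - i) := by
  have h := congrArg (Polynomial.eval x) (Multiset.prod_X_add_C_eq_sum_esymm (univ.val.map s))
  simpa [prod_map_val, Polynomial.eval_prod, Polynomial.eval_finsetSum,
    aeval_esymm_eq_multiset_esymm] using h

end Vieta

section Nullstellensatz

variable {σ τ R A K : Type*} [CommRing R] [CommRing A] [Algebra R A]
  [Field K] [IsAlgClosed K] [Algebra R K]

theorem eq_zero_of_forall_aeval_eq_zero [IsDomain A] [Infinite A] [FaithfulSMul R A]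
    {Q : MvPolynomial τ R} (h : ∀ c : τ → A, aeval c Q = 0) : Q = 0 := by
  apply map_injective _ (FaithfulSMul.algebraMap_injective R A)
  refine MvPolynomial.funext fun c ↦ ?_
  rw [eval_map, ← aeval_def, h, map_zero, map_zero]

theorem aeval_sub_aeval_mem {I : Ideal A} {f g : τ → A} (h : ∀ i, f i - g i ∈ I)
    (Q : MvPolynomial τ R) : aeval f Q - aeval g Q ∈ I := by
  have hfg : (Ideal.Quotient.mkₐ R I).comp (aeval f) = (Ideal.Quotient.mkₐ R I).comp (aeval g) := by
    ext i
    simpa using Ideal.Quotient.eq.mpr (h i)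
  exact Ideal.Quotient.eq.mp (DFunLike.congr_fun hfg Q)

theorem aeval_mem_span_image {S : Set τ} [DecidablePred (· ∈ S)] {Q : MvPolynomial τ R}
    (hQ : aeval (fun i ↦ if i ∈ S then 0 else X i : τ → MvPolynomial τ R) Q = 0) (f : τ → A) :
    aeval f Q ∈ Ideal.span (f '' S) := by
  have hmem : aeval f Q - aeval (fun i ↦ if i ∈ S then 0 else f i) Q ∈ Ideal.span (f '' S) := by
    refine aeval_sub_aeval_mem (fun i ↦ ?_) Q
    by_cases hi : i ∈ S
    · simpa [hi] using Ideal.subset_span (Set.mem_image_of_mem f hi)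
    · simp [hi]
  have hzero : aeval (fun i ↦ if i ∈ S then 0 else f i) Q = 0 := by
    have h := congrArg (aeval f) hQ
    rw [comp_aeval_apply, map_zero] at h
    simpa only [apply_ite (aeval f), map_zero, aeval_X] using h
  rwa [hzero, sub_zero] at hmem

theorem mem_span_esymm_of_forall_aeval_eq_zero [Fintype σ] [FaithfulSMul R K] {P : MvPolynomial σ R}
    (hP : P.IsSymmetric) {T : Set ℕ}
    (hT : ∀ s : σ → K, (∀ i ∈ T, aeval s (esymm σ R i) = 0) → aeval s P = 0) :
    P ∈ Ideal.span (esymm σ R '' T) := by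
  classical
  by_cases h0 : 0 ∈ T
  · have hone : (1 : MvPolynomial σ R) ∈ Ideal.span (esymm σ R '' T) :=
      Ideal.subset_span ⟨0, h0, esymm_zero σ R⟩
    exact (Ideal.eq_top_iff_one _).mpr hone ▸ Submodule.mem_top
  let E (i : Fin (Fintype.card σ)) : MvPolynomial σ R := esymm σ R (i + 1)
  let S : Set (Fin (Fintype.card σ)) := {i | (i + 1 : ℕ) ∈ T}
  obtain ⟨Q, hQ⟩ : ∃ Q, aeval E Q = P := by
    obtain ⟨Q, hQ⟩ := esymmAlgHom_surjective (σ := σ) R le_rfl ⟨P, hP⟩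
    exact ⟨Q, by rw [← esymmAlgHom_apply, hQ]⟩
  have hkill : aeval (fun i ↦ if i ∈ S then 0 else X i : _ → MvPolynomial _ R) Q = 0 := by
    refine eq_zero_of_forall_aeval_eq_zero (A := K) fun c ↦ ?_
    obtain ⟨s, hs⟩ := exists_aeval_esymm_eq (σ := σ) R fun i ↦ if i ∈ S then 0 else c i
    have hvanish : ∀ i ∈ T, aeval s (esymm σ R i) = 0 := by
      intro i hi
      rcases lt_or_ge (Fintype.card σ) i with hcard | hcard
      · rw [esymm_eq_zero_of_card_lt hcard, map_zero]
      · obtain _ | j := i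
        · exact absurd hi h0
        · exact (hs ⟨j, hcard⟩).trans (if_pos hi)
    rw [← hT s hvanish, ← hQ, comp_aeval_apply, comp_aeval_apply]
    simp only [apply_ite (aeval c), map_zero, aeval_X, E, hs]
  rw [← hQ]
  refine Ideal.span_mono ?_ (aeval_mem_span_image hkill E)
  rintro _ ⟨i, hi, rfl⟩
  exact ⟨i + 1, hi, rfl⟩

end Nullstellensatz

section Additive

variable {σ R A : Type*} [Fintype σ] [CommSemiring R] [CommSemiring A] [Algebra R A]

/-- The indices `i` for which `eᵢ` is, in the product `∏ⱼ (x + tⱼ)` of `p ^ m` factors, the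
coefficient of a power `x ^ (p ^ m - i)` whose exponent is neither zero nor a power of `p`. When
these `eᵢ` vanish in characteristic `p`, the product is an additive polynomial in `x` plus a
constant. The leading index `0` is removed as the term `k = m`. -/
def nonadditiveIndices (p m : ℕ) : Finset ℕ :=
  range (p ^ m) \ (range (m + 1)).image fun k ↦ p ^ m - p ^ k

theorem prod_add_eq_aeval_esymm_add_sum {p m : ℕ} (hp : 1 < p) (hcard : Fintype.card σ = p ^ m)
    {s : σ → A} (hs : ∀ i ∈ nonadditiveIndices p m, aeval s (esymm σ R i) = 0) (x : A) :
    ∏ j, (x + s j) = aeval s (esymm σ R (p ^ m)) +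
      ∑ k ∈ range (m + 1), aeval s (esymm σ R (p ^ m - p ^ k)) * x ^ p ^ k := by
  have hpow {k : ℕ} (hk : k ∈ range (m + 1)) : p ^ k ≤ p ^ m :=
    Nat.pow_le_pow_right hp.le (Nat.le_of_lt_succ (mem_range.mp hk))
  rw [prod_add_eq_sum_aeval_esymm R, hcard, sum_range_succ, Nat.sub_self, pow_zero, mul_one,
    add_comm]
  congr 1
  symm
  refine sum_of_injOn (fun k ↦ p ^ m - p ^ k) ?_ ?_ ?_ ?_
  · intro k hk l hl hkl
    exact Nat.pow_right_injective hp ((tsub_right_inj (hpow hk) (hpow hl)).mp hkl)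
  · intro k _
    simpa using ⟨by positivity, by positivity⟩
  · intro i hi hik
    rw [hs i (mem_sdiff.mpr ⟨hi, by simpa using hik⟩), zero_mul]
  · intro k hk
    rw [Nat.sub_sub_self (hpow hk)]

theorem prod_add_add_eq_prod_add_sum {p m : ℕ} [Fact p.Prime] [CharP A p]
    (hcard : Fintype.card σ = p ^ m) {s : σ → A}
    (hs : ∀ i ∈ nonadditiveIndices p m, aeval s (esymm σ R i) = 0) (x y : A) :
    ∏ j, (x + y + s j) = ∏ j, (x + s j) +
      ∑ k ∈ range (m + 1), aeval s (esymm σ R (p ^ m - p ^ k)) * y ^ p ^ k := by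
  have hp : 1 < p := Nat.Prime.one_lt Fact.out
  simp only [prod_add_eq_aeval_esymm_add_sum hp hcard hs, add_pow_char_pow, mul_add,
    sum_add_distrib]
  rw [add_assoc]

end Additive

section ExteriorSquare

variable {σ R A : Type*} [Fintype σ] [LinearOrder σ] [CommRing R] [CommRing A]

theorem prod_lt_sq {M : Type*} [CommMonoid M] {f : σ → σ → M} (hsymm : ∀ i j, f i j = f j i)
    (hdiag : ∀ i, f i i = 1) :
    (∏ p : σ × σ with p.1 < p.2, f p.1 p.2) ^ 2 = ∏ i, ∏ j, f i j := by
  have hswap : ∏ p : σ × σ with p.1 < p.2, f p.1 p.2 = ∏ p : σ × σ with p.2 < p.1, f p.1 p.2 :=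
    prod_equiv (Equiv.prodComm σ σ) (by simp) fun p _ ↦ hsymm p.1 p.2
  rw [sq]
  nth_rw 2 [hswap]
  rw [prod_filter, prod_filter, ← prod_mul_distrib, ← Fintype.prod_prod_type']
  refine prod_congr rfl fun ⟨i, j⟩ _ ↦ ?_
  rcases lt_trichotomy i j with h | rfl | h
  · simp [h, h.not_gt]
  · simp [hdiag]
  · simp [h, h.not_gt]

theorem prod_lt_one_add_add_sq [CharP A 2] (s : σ → A) :
    (∏ p : σ × σ with p.1 < p.2, (1 + s p.1 + s p.2)) ^ 2 = ∏ i, ∏ j, (1 + s i + s j) :=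
  prod_lt_sq (f := fun i j ↦ 1 + s i + s j) (fun _ _ ↦ add_right_comm _ _ _)
    fun _ ↦ CharTwo.add_cancel_right _ _

/-- The total Stiefel–Whitney class of the second exterior power of a vector bundle, as a polynomial
in the Stiefel–Whitney roots `tⱼ` of the bundle, whose exterior square has roots `tⱼ + tₖ`,
`j < k`. -/
noncomputable def exteriorSquareClass (σ R : Type*) [Fintype σ] [LinearOrder σ] [CommSemiring R] :
    MvPolynomial σ R :=
  ∏ p : σ × σ with p.1 < p.2, (1 + X p.1 + X p.2)

theorem map_exteriorSquareClass {R S : Type*} [CommSemiring R] [CommSemiring S] (φ : R →+* S) :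
    map φ (exteriorSquareClass σ R) = exteriorSquareClass σ S := by
  simp only [exteriorSquareClass, map_prod, map_add, map_one, map_X]

theorem isSymmetric_exteriorSquareClass [IsDomain R] [CharP R 2] :
    (exteriorSquareClass σ R).IsSymmetric := by
  intro π
  apply CharTwo.sq_injective
  simp only [exteriorSquareClass, map_prod, map_add, map_one, rename_X]
  rw [prod_lt_one_add_add_sq (A := MvPolynomial σ R) X,
    prod_lt_one_add_add_sq (A := MvPolynomial σ R) fun i ↦ X (π i)]
  exact Fintype.prod_equiv π _ _ fun i ↦ Fintype.prod_equiv π _ _ fun j ↦ rfl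

theorem aeval_exteriorSquareClass [IsDomain A] [CharP A 2] [Algebra R A] {m : ℕ}
    (hcard : Fintype.card σ = 2 ^ (m + 1)) {s : σ → A}
    (hs : ∀ i ∈ nonadditiveIndices 2 (m + 1), aeval s (esymm σ R i) = 0) :
    aeval s (exteriorSquareClass σ R) =
      (∑ k ∈ range (m + 2), aeval s (esymm σ R (2 ^ (m + 1) - 2 ^ k))) ^ 2 ^ m := by
  set c := ∑ k ∈ range (m + 2), aeval s (esymm σ R (2 ^ (m + 1) - 2 ^ k)) with hc
  have hrow (i : σ) : ∏ j, (1 + s i + s j) = c := by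
    have hroot : ∏ j, (s i + s j) = 0 := prod_eq_zero (mem_univ i) (CharTwo.add_self_eq_zero _)
    simp only [add_comm 1 (s i), prod_add_add_eq_prod_add_sum hcard hs, hroot, one_pow, mul_one,
      zero_add, hc]
  apply CharTwo.sq_injective
  calc aeval s (exteriorSquareClass σ R) ^ 2
      = ∏ i, ∏ j, (1 + s i + s j) := by
        rw [← prod_lt_one_add_add_sq]
        simp only [exteriorSquareClass, map_prod, map_add, map_one, aeval_X]
    _ = c ^ 2 ^ (m + 1) := by simp only [hrow, prod_const, card_univ, hcard]
    _ = (c ^ 2 ^ m) ^ 2 := by rw [pow_succ, pow_mul]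

theorem exteriorSquareClass_sub_mem_span_of_field {k : Type*} [Field k] [CharP k 2] {m : ℕ}
    (hcard : Fintype.card σ = 2 ^ (m + 1)) :
    exteriorSquareClass σ k - (∑ j ∈ range (m + 2), esymm σ k (2 ^ (m + 1) - 2 ^ j)) ^ 2 ^ m ∈
      Ideal.span (esymm σ k '' nonadditiveIndices 2 (m + 1)) := by
  let K := AlgebraicClosure k
  have : CharP K 2 := charP_of_injective_algebraMap (FaithfulSMul.algebraMap_injective k K) 2
  refine mem_span_esymm_of_forall_aeval_eq_zero (K := K) ?_ fun s hs ↦ ?_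
  · exact (symmetricSubalgebra σ k).sub_mem isSymmetric_exteriorSquareClass
      (pow_mem (sum_mem fun _ _ ↦ esymm_isSymmetric σ k _) _)
  · rw [map_sub, map_pow, map_sum, aeval_exteriorSquareClass hcard hs, sub_self]

theorem lambda2_spin8_general [CharP R 2] {m : ℕ} (hcard : Fintype.card σ = 2 ^ (m + 1)) :
    exteriorSquareClass σ R - (∑ k ∈ range (m + 2), esymm σ R (2 ^ (m + 1) - 2 ^ k)) ^ 2 ^ m ∈
      Ideal.span (esymm σ R '' nonadditiveIndices 2 (m + 1)) := by
  have h := Ideal.mem_map_of_mem (map (ZMod.castHom dvd_rfl R))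
    (exteriorSquareClass_sub_mem_span_of_field (k := ZMod 2) hcard)
  simpa only [map_sub, map_pow, map_sum, map_esymm, map_exteriorSquareClass, Ideal.map_span,
    Set.image_image] using h

end ExteriorSquare

theorem esymm_image_nonadditiveIndices_two_three :
    esymm (Fin 8) (ZMod 2) '' nonadditiveIndices 2 3 = {e 1, e 2, e 3, e 5} := by
  have hindices : nonadditiveIndices 2 3 = {1, 2, 3, 5} := by decide
  simp [hindices, Set.image_insert_eq, e]

/-- in `𝔽₂[t₁,…,t₈]`, `∏_{1≤j<k≤8} (1 + t_j + t_k)` is congruent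
to `(1 + e₄ + e₆ + e₇)⁴` modulo the ideal `(e₁, e₂, e₃, e₅)`. -/
theorem lambda2_spin8 :
    (∏ p ∈ univ.filter (fun p : Fin 8 × Fin 8 => p.1 < p.2),
        (1 + X p.1 + X p.2) : MvPolynomial (Fin 8) (ZMod 2))
      - (1 + e 4 + e 6 + e 7) ^ 4 ∈ Ideal.span {e 1, e 2, e 3, e 5} := by
  have hsum : ∑ k ∈ range 4, esymm (Fin 8) (ZMod 2) (2 ^ 3 - 2 ^ k) = 1 + e 4 + e 6 + e 7 := by
    simp [sum_range_succ', e]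
  rw [← esymm_image_nonadditiveIndices_two_three, ← hsum]
  exact lambda2_spin8_general (m := 2) (Fintype.card_fin 8)
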